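/- Let d ≥ 1 and m > 2d a real number. Let χ₁ : ℝ^{2d} → ℝ^{2d} be a Lipschitz bijection with Lipschitz constant L > 0 which preserves Lebesgue measure, and let χ₂ : ℝ^{2d} → ℝ^{2d} be any map. Let T₂ : 𝒮(ℝ^d) → 𝒮(ℝ^d) be a continuous linear operator and T₁ : 𝒮(ℝ^d) → 𝒮′(ℝ^d) a continuous linear operator, and suppose |⟨T₁(π(z)g), π(w)g⟩| ≤ A₁·(1+|w−χ₁(z)|²)^{−m/2} and |⟨T₂(π(z)g), π(w)g⟩| ≤ A₂·(1+|w−χ₂(z)|²)^{−m/2} for all z, w ∈ ℝ^{2d}, with A₁, A₂ ≥ 0. Then there exists a constant C > 0, depending only on m, d and L, such that |⟨T₁(T₂(π(z)g)), π(w)g⟩| ≤ C·A₁·A₂·(1+|w−χ₁(χ₂(z))|²)^{−m/2} for all z, w ∈ ℝ^{2d}. -/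

import Mathlib

open MeasureTheory Complex Real
open scoped ENNReal RealInnerProductSpace

noncomputable section

abbrev E (d : ℕ) : Type := EuclideanSpace ℝ (Fin d)

/-- Phase space `ℝ^{2d} = ℝ^d × ℝ^d`. -/
abbrev P (d : ℕ) : Type := E d × E d

/-- The Schwartz space `𝒮(ℝ^d)` of complex valued functions. -/
abbrev SCH (d : ℕ) : Type := SchwartzMap (E d) ℂ

/-- Square of the Euclidean norm on the phase space `ℝ^{2d}`. -/
def ensq {d : ℕ} (z : P d) : ℝ := ‖z.1‖ ^ 2 + ‖z.2‖ ^ 2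

section SchwartzIntegral

variable {V : Type*} [NormedAddCommGroup V]
  {W : Type*}

open Filter Topology BoundedContinuousFunction

/-- A jointly continuous function decaying in the second variable, uniformly in the first one,
depends continuously on the first variable in the uniform norm. -/
theorem continuous_boundedContinuousFunction_of_decay [ProperSpace V] [TopologicalSpace W]
    {F : Type*} [NormedAddCommGroup F] {J : W × V → F} (hJ : Continuous J) {C : ℝ}
    (hC : ∀ w y, ‖y‖ * ‖J (w, y)‖ ≤ C) {Φ : W → V →ᵇ F} (hΦ : ∀ w y, Φ w y = J (w, y)) :
    Continuous Φ := by
  have hC0 : 0 ≤ C ∨ IsEmpty W := by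
    by_cases h : IsEmpty W
    · exact Or.inr h
    · obtain ⟨w⟩ := not_isEmpty_iff.1 h
      exact Or.inl (by simpa using hC w 0)
  rcases hC0 with hC0 | h
  swap
  · exact continuous_of_const fun x => h.elim x
  rw [continuous_iff_continuousAt]
  intro w₀
  rw [ContinuousAt, Metric.tendsto_nhds]
  intro ε hε
  set R : ℝ := 4 * (C + 1) / ε
  have hR : 0 < R := by positivity
  have hev : ∀ᶠ w in 𝓝 w₀, ∀ y ∈ Metric.closedBall (0 : V) R,
      dist (J (w, y)) (J (w₀, y)) < ε / 2 := by
    refine (isCompact_closedBall (0 : V) R).eventually_forall_of_forall_eventually ?_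
    intro y _
    have hc : Continuous fun p : W × V => dist (J (p.1, p.2)) (J (w₀, p.2)) := by fun_prop
    exact hc.continuousAt.eventually_lt (g := fun _ => ε / 2) continuousAt_const (by simpa)
  filter_upwards [hev] with w hw
  refine lt_of_le_of_lt ?_ (half_lt_self hε)
  refine (BoundedContinuousFunction.dist_le (by positivity)).2 fun y => ?_
  rw [hΦ, hΦ]
  by_cases hy : ‖y‖ ≤ R
  · exact (hw y (by simpa using hy)).le
  · push Not at hy
    have key : ∀ w, ‖J (w, y)‖ ≤ ε / 4 := by
      intro w
      have h1 := hC w y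
      have h2 : R * ‖J (w, y)‖ ≤ C + 1 := by
        have := mul_le_mul_of_nonneg_right hy.le (norm_nonneg (J (w, y)))
        linarith
      have h3 : 4 * (C + 1) * ‖J (w, y)‖ ≤ (C + 1) * ε := by
        have : R * ‖J (w, y)‖ = 4 * (C + 1) * ‖J (w, y)‖ / ε := by simp only [R]; ring
        rwa [this, div_le_iff₀ hε] at h2
      nlinarith
    rw [dist_eq_norm]
    refine (norm_sub_le _ _).trans ?_
    linarith [key w, key w₀]

variable [NormedSpace ℝ V]

/-- The space of complex valued continuous real `l`-linear forms, where derivatives of order `l`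
live. -/
def MultiForm (V : Type*) [NormedAddCommGroup V] [NormedSpace ℝ V] (l : ℕ) : Type _ :=
  V [×l]→L[ℝ] ℂ

instance (l : ℕ) : NormedAddCommGroup (MultiForm V l) :=
  inferInstanceAs (NormedAddCommGroup (V [×l]→L[ℝ] ℂ))

instance (l : ℕ) : NormedSpace ℝ (MultiForm V l) :=
  inferInstanceAs (NormedSpace ℝ (V [×l]→L[ℝ] ℂ))

instance (l : ℕ) : NormedSpace ℂ (MultiForm V l) :=
  inferInstanceAs (NormedSpace ℂ (V [×l]→L[ℝ] ℂ))

instance (l : ℕ) : SMulCommClass ℝ ℂ (MultiForm V l) :=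
  inferInstanceAs (SMulCommClass ℝ ℂ (V [×l]→L[ℝ] ℂ))

instance (l : ℕ) : CompleteSpace (MultiForm V l) :=
  inferInstanceAs (CompleteSpace (V [×l]→L[ℝ] ℂ))

/-- The derivative of order `l`. -/
def iterD (l : ℕ) (f : V → ℂ) (y : V) : MultiForm V l := iteratedFDeriv ℝ l f y

theorem norm_iterD (l : ℕ) (f : V → ℂ) (y : V) : ‖iterD l f y‖ = ‖iteratedFDeriv ℝ l f y‖ := rfl

/-- Currying of forms in the first variable. -/
def MultiForm.uncurry (V : Type*) [NormedAddCommGroup V] [NormedSpace ℝ V] (l : ℕ) :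
    (V →L[ℝ] MultiForm V l) ≃L[ℝ] MultiForm V (l + 1) :=
  (continuousMultilinearCurryLeftEquiv ℝ
    (fun _ : Fin (l + 1) => V) ℂ).symm.toContinuousLinearEquiv

/-- Constants as forms of degree zero. -/
def MultiForm.const (V : Type*) [NormedAddCommGroup V] [NormedSpace ℝ V] :
    ℂ ≃L[ℝ] MultiForm V 0 :=
  (continuousMultilinearCurryFin0 ℝ V ℂ).symm.toContinuousLinearEquiv

theorem iterD_zero (f : V → ℂ) (y : V) : iterD 0 f y = MultiForm.const V (f y) := by
  unfold iterD
  rw [iteratedFDeriv_zero_eq_comp]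
  rfl

theorem iterD_succ (l : ℕ) (f : V → ℂ) (y : V) :
    iterD (l + 1) f y = MultiForm.uncurry V l (fderiv ℝ (iterD l f) y) := by
  unfold iterD
  rw [iteratedFDeriv_succ_eq_comp_left]
  rfl

theorem hasFDerivAt_iterD (l : ℕ) (f : SchwartzMap V ℂ) (y : V) :
    HasFDerivAt (iterD l f) (fderiv ℝ (iterD l f) y) y :=
  (((f.smooth (l + 1)).differentiable_iteratedFDeriv (m := l)
    (by exact_mod_cast Nat.lt_succ_self l)) y).hasFDerivAt

theorem norm_fderiv_iterD (l : ℕ) (f : V → ℂ) (y : V) :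
    ‖fderiv ℝ (iterD l f) y‖ = ‖iterD (l + 1) f y‖ :=
  norm_fderiv_iteratedFDeriv

theorem continuous_iterD (l : ℕ) (f : SchwartzMap V ℂ) : Continuous (iterD l f) :=
  (f.smooth l).continuous_iteratedFDeriv le_rfl

/-- Differentiation of all orders under the integral sign. -/
theorem iterD_eq_integral [TopologicalSpace W] [SecondCountableTopology W]
    [MeasurableSpace W] [OpensMeasurableSpace W]
    {μ : Measure W} {K : W → SchwartzMap V ℂ} {F : V → ℂ} (hF : ∀ y, F y = ∫ w, K w y ∂μ)
    (hcont : ∀ (l : ℕ) (y : V), Continuous fun w => iterD l (K w) y)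
    {b : W → ℝ} (hb : Integrable b μ)
    (hbound : ∀ l : ℕ, ∃ C : ℝ, ∀ w y, ‖iterD l (K w) y‖ ≤ C * b w)
    (l : ℕ) (y : V) :
    iterD l F y = ∫ w, iterD l (K w) y ∂μ := by
  have hinteg : ∀ (l : ℕ) (y : V), Integrable (fun w => iterD l (K w) y) μ := by
    intro l y
    obtain ⟨C, hC⟩ := hbound l
    exact (hb.const_mul C).mono' (hcont l y).aestronglyMeasurable
      (Eventually.of_forall fun w => hC w y)
  induction l generalizing y with
  | zero =>
    simp_rw [iterD_zero, hF]
    exact ((MultiForm.const V).integral_comp_comm (fun w => K w y)).symm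
  | succ l ih =>
    have hfun : iterD l F = fun y => ∫ w, iterD l (K w) y ∂μ :=
      funext ih
    have hs : ∀ (f : V → ℂ) (y), fderiv ℝ (iterD l f) y =
        (MultiForm.uncurry V l).symm (iterD (l + 1) f y) := fun f y => by
      rw [iterD_succ, ContinuousLinearEquiv.symm_apply_apply]
    have hd : HasFDerivAt (fun y => ∫ w, iterD l (K w) y ∂μ)
        (∫ w, fderiv ℝ (iterD l (K w)) y ∂μ) y := by
      obtain ⟨C, hC⟩ := hbound (l + 1)
      refine hasFDerivAt_integral_of_dominated_of_fderiv_le (bound := fun w => C * b w)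
        (F := fun y w => iterD l (K w) y) (F' := fun y w => fderiv ℝ (iterD l (K w)) y)
        (s := Set.univ) Filter.univ_mem ?_ (hinteg l y) ?_ ?_ (hb.const_mul C) ?_
      · exact Eventually.of_forall fun y => (hinteg l y).aestronglyMeasurable
      · simp_rw [hs]
        exact ((MultiForm.uncurry V l).symm.continuous.comp
          (hcont (l + 1) y)).aestronglyMeasurable
      · refine Eventually.of_forall fun w y _ => ?_
        rw [norm_fderiv_iterD]
        exact hC w y
      · exact Eventually.of_forall fun w y _ => hasFDerivAt_iterD l (K w) y
    rw [iterD_succ, hfun, hd.fderiv]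
    simp_rw [iterD_succ]
    exact ((MultiForm.uncurry V l).integral_comp_comm _).symm

/-- The weighted derivative `y ↦ ‖y‖ ^ k • D^l f (y)` of a Schwartz function, as a bounded
continuous function. -/
def weightedDeriv (k l : ℕ) : SchwartzMap V ℂ →ₗ[ℂ] (V →ᵇ MultiForm V l) where
  toFun f := BoundedContinuousFunction.ofNormedAddCommGroup
    (fun y => ‖y‖ ^ k • iterD l f y)
    ((continuous_norm.pow k).smul (continuous_iterD l f))
    (SchwartzMap.seminorm ℂ k l f) (fun y => by
      rw [norm_smul, norm_pow, norm_norm, norm_iterD]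
      exact SchwartzMap.le_seminorm ℂ k l f y)
  map_add' f g := by
    ext1 y
    change ‖y‖ ^ k • iteratedFDeriv ℝ l ((f : V → ℂ) + (g : V → ℂ)) y = _
    rw [iteratedFDeriv_add_apply (f.smooth _).contDiffAt (g.smooth _).contDiffAt, smul_add]
    rfl
  map_smul' c f := by
    ext1 y
    change ‖y‖ ^ k • iteratedFDeriv ℝ l (c • (f : V → ℂ)) y = _
    rw [iteratedFDeriv_const_smul_apply (f.smooth _).contDiffAt, smul_comm]
    rfl

theorem weightedDeriv_apply (k l : ℕ) (f : SchwartzMap V ℂ) (y : V) :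
    weightedDeriv k l f y = ‖y‖ ^ k • iterD l f y := rfl

theorem seminorm_le_norm_weightedDeriv (k l : ℕ) (f : SchwartzMap V ℂ) :
    SchwartzMap.seminorm ℂ k l f ≤ ‖weightedDeriv k l f‖ := by
  refine SchwartzMap.seminorm_le_bound ℂ k l f (norm_nonneg _) fun y => ?_
  have := (weightedDeriv k l f).norm_coe_le_norm y
  rwa [weightedDeriv_apply, norm_smul, norm_pow, norm_norm, norm_iterD] at this

/-- A continuous functional on the Schwartz space extends to a product of finitely many spaces of
bounded continuous functions. -/
theorem exists_eq_comp_weightedDeriv (lam : SchwartzMap V ℂ →L[ℂ] ℂ) :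
    ∃ (s : Finset (ℕ × ℕ)) (Lam : (∀ i : s, V →ᵇ MultiForm V i.1.2) →L[ℂ] ℂ),
      ∀ f, lam f = Lam (fun i => weightedDeriv i.1.1 i.1.2 f) := by
  classical
  obtain ⟨s₀, C, -, hC⟩ := Seminorm.bound_of_continuous (schwartz_withSeminorms ℂ V ℂ)
    ((normSeminorm ℂ ℂ).comp lam.toLinearMap) (by
      change Continuous fun f => ‖lam f‖
      fun_prop)
  set s : Finset (ℕ × ℕ) := insert (0, 0) s₀
  let ι : SchwartzMap V ℂ →ₗ[ℂ] (∀ i : s, V →ᵇ MultiForm V i.1.2) :=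
    LinearMap.pi fun i => weightedDeriv i.1.1 i.1.2
  have hι : ∀ f i, ι f i = weightedDeriv i.1.1 i.1.2 f := fun f i => rfl
  have hinj : Function.Injective ι := by
    rw [← LinearMap.ker_eq_bot, LinearMap.ker_eq_bot']
    intro f hf
    ext y
    have h0 : weightedDeriv 0 0 f = 0 := by
      have := congrFun hf ⟨(0, 0), Finset.mem_insert_self _ _⟩
      rwa [hι] at this
    have := DFunLike.congr_fun h0 y
    rw [weightedDeriv_apply, pow_zero, one_smul] at this
    have h2 := congrArg norm this
    simpa [norm_iterD, norm_iteratedFDeriv_zero] using h2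
  have hle : ∀ f, ‖lam f‖ ≤ C * ‖ι f‖ := by
    intro f
    refine (hC f).trans ?_
    rw [_root_.smul_apply, NNReal.smul_def, smul_eq_mul]
    refine mul_le_mul_of_nonneg_left ?_ C.2
    refine Seminorm.finset_sup_apply_le (norm_nonneg _) fun i hi => ?_
    refine (seminorm_le_norm_weightedDeriv i.1 i.2 f).trans ?_
    exact norm_le_pi_norm (ι f) ⟨i, Finset.mem_insert_of_mem hi⟩
  let eqv := LinearEquiv.ofInjective ι hinj
  let φ : StrongDual ℂ (LinearMap.range ι) :=
    (lam.toLinearMap ∘ₗ eqv.symm.toLinearMap).mkContinuous C (by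
      intro x
      obtain ⟨f, rfl⟩ := eqv.surjective x
      simpa using! hle f)
  obtain ⟨Lam, hLam, -⟩ := exists_extension_norm_eq (LinearMap.range ι) φ
  refine ⟨s, Lam, fun f => ?_⟩
  have h1 := hLam (eqv f)
  have h2 : φ (eqv f) = lam f := by
    change lam (eqv.symm (eqv f)) = _
    rw [LinearEquiv.symm_apply_apply]
  rw [← h2, ← h1]
  rfl

/-- A continuous functional on the Schwartz space commutes with absolutely convergent integrals
of continuous families of Schwartz functions. -/
theorem schwartz_functional_integral [ProperSpace V] [TopologicalSpace W]
    [SecondCountableTopology W]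
    [MeasurableSpace W] [OpensMeasurableSpace W]
    {μ : Measure W} {K : W → SchwartzMap V ℂ} {F : SchwartzMap V ℂ}
    (hF : ∀ y, F y = ∫ w, K w y ∂μ)
    (hcont : ∀ l : ℕ, Continuous fun p : W × V => iterD l (K p.1) p.2)
    {b : W → ℝ} (hb : Integrable b μ) (hb1 : ∀ w, b w ≤ 1)
    (hbound : ∀ k l : ℕ, ∃ C : ℝ, 0 ≤ C ∧
      ∀ w y, ‖y‖ ^ k * ‖iterD l (K w) y‖ ≤ C * b w)
    (lam : SchwartzMap V ℂ →L[ℂ] ℂ) :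
    lam F = ∫ w, lam (K w) ∂μ := by
  obtain ⟨s, Lam, hLam⟩ := exists_eq_comp_weightedDeriv lam
  have hc : ∀ k l : ℕ, Continuous fun w => weightedDeriv k l (K w) := by
    intro k l
    obtain ⟨C, hC0, hC⟩ := hbound (k + 1) l
    refine continuous_boundedContinuousFunction_of_decay
      (J := fun p : W × V => ‖p.2‖ ^ k • iterD l (K p.1) p.2) (C := C) ?_ ?_ ?_
    · exact (continuous_snd.norm.pow k).smul (hcont l)
    · intro w y
      rw [norm_smul, norm_pow, norm_norm, ← mul_assoc, ← pow_succ']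
      exact (hC w y).trans (mul_le_of_le_one_right hC0 (hb1 w))
    · exact fun w y => rfl
  have hinteg : ∀ k l : ℕ, Integrable (fun w => weightedDeriv k l (K w)) μ := by
    intro k l
    obtain ⟨C, hC0, hC⟩ := hbound k l
    refine (hb.const_mul C).mono' (hc k l).aestronglyMeasurable (Eventually.of_forall fun w => ?_)
    have h0 : 0 ≤ C * b w := le_trans (by positivity) (hC w 0)
    refine (BoundedContinuousFunction.norm_le h0).2 fun y => ?_
    rw [weightedDeriv_apply, norm_smul, norm_pow, norm_norm]
    exact hC w y
  have hpi : Integrable (fun w => (fun i : s => weightedDeriv i.1.1 i.1.2 (K w))) μ :=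
    Integrable.of_eval fun i => hinteg _ _
  have hFi : (fun i : s => weightedDeriv i.1.1 i.1.2 F) =
      ∫ w, (fun i : s => weightedDeriv i.1.1 i.1.2 (K w)) ∂μ := by
    funext i
    rw [eval_integral fun i => hinteg _ _]
    ext1 y
    have h1 := (BoundedContinuousFunction.evalCLM ℝ y).integral_comp_comm (hinteg i.1.1 i.1.2)
    simp only [BoundedContinuousFunction.evalCLM_apply] at h1
    rw [← h1, weightedDeriv_apply]
    simp_rw [weightedDeriv_apply]
    rw [integral_smul]
    congr 1
    refine iterD_eq_integral hF (fun l y => ?_) hb (fun l => ?_) _ y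
    · exact (hcont l).comp (continuous_id.prodMk continuous_const)
    · obtain ⟨C, -, hC⟩ := hbound 0 l
      exact ⟨C, fun w y => by simpa using hC w y⟩
  rw [hLam F, hFi, ← Lam.integral_comp_comm hpi]
  simp_rw [hLam]

end SchwartzIntegral

section JapaneseBracket

variable {d : ℕ}

instance : (volume : Measure (P d)).IsAddHaarMeasure :=
  inferInstanceAs ((volume : Measure (E d)).prod (volume : Measure (E d))).IsAddHaarMeasure

theorem ensq_nonneg (z : P d) : 0 ≤ ensq z := by
  unfold ensq; positivity

theorem norm_sq_le_ensq (z : P d) : ‖z‖ ^ 2 ≤ ensq z := by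
  unfold ensq
  rw [Prod.norm_def]
  rcases max_cases ‖z.1‖ ‖z.2‖ with ⟨h, -⟩ | ⟨h, -⟩ <;> rw [h] <;>
    nlinarith [sq_nonneg ‖z.1‖, sq_nonneg ‖z.2‖]

theorem ensq_add_le (a b : P d) : ensq (a + b) ≤ 2 * (ensq a + ensq b) := by
  have key : ∀ u v : E d, ‖u + v‖ ^ 2 ≤ 2 * (‖u‖ ^ 2 + ‖v‖ ^ 2) := fun u v => by
    nlinarith [norm_add_le u v, norm_nonneg (u + v), sq_nonneg (‖u‖ - ‖v‖)]
  unfold ensq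
  have h1 := key a.1 b.1
  have h2 := key a.2 b.2
  simp only [Prod.fst_add, Prod.snd_add]
  linarith

theorem continuous_ensq : Continuous (ensq : P d → ℝ) := by
  unfold ensq
  fun_prop

theorem continuous_bracket (s : ℝ) (a : P d) :
    Continuous fun z : P d => (1 + ensq (z - a)) ^ (-s) := by
  refine Continuous.rpow_const ?_ fun z => Or.inl ?_
  · exact continuous_const.add (continuous_ensq.comp (continuous_id.sub continuous_const))
  · have := ensq_nonneg (z - a)
    positivity

theorem integrable_bracket {m : ℝ} (hm : 2 * (d : ℝ) < m) (a : P d) :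
    Integrable fun z : P d => (1 + ensq (z - a)) ^ (-(m / 2)) := by
  have hdim : (Module.finrank ℝ (P d) : ℝ) < m := by
    rw [Module.finrank_prod, finrank_euclideanSpace_fin]
    push_cast
    linarith
  have h0 := (integrable_rpow_neg_one_add_norm_sq (μ := (volume : Measure (P d))) hdim)
  have h1 := h0.comp_sub_right a
  refine h1.mono' (continuous_bracket (m / 2) a).aestronglyMeasurable (.of_forall fun z => ?_)
  have hn := ensq_nonneg (z - a)
  rw [Real.norm_of_nonneg (by positivity), neg_div]
  refine Real.rpow_le_rpow_of_nonpos (by positivity) ?_ ?_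
  · linarith [norm_sq_le_ensq (z - a)]
  · have : (0 : ℝ) ≤ d := by positivity
    linarith

/-- Peetre type inequality underlying the convolution estimate for brackets. -/
theorem rpow_neg_mul_rpow_neg_le {s A B D : ℝ} (hs : 0 ≤ s) (hA : 1 ≤ A) (hB : 1 ≤ B)
    (hD : 1 ≤ D) (h : D ≤ 2 * (A + B)) :
    A ^ (-s) * B ^ (-s) ≤ 4 ^ s * D ^ (-s) * (A ^ (-s) + B ^ (-s)) := by
  have key : ∀ X : ℝ, 1 ≤ X → D ≤ 4 * X → X ^ (-s) ≤ 4 ^ s * D ^ (-s) := by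
    intro X hX hDX
    have h1 : (4 * X) ^ (-s) ≤ D ^ (-s) :=
      Real.rpow_le_rpow_of_nonpos (by linarith) hDX (by linarith)
    rw [Real.mul_rpow (by norm_num) (by linarith), Real.rpow_neg (by norm_num),
      inv_mul_le_iff₀ (by positivity)] at h1
    exact h1
  have hA0 : 0 ≤ A ^ (-s) := by positivity
  have hB0 : 0 ≤ B ^ (-s) := by positivity
  have hD0 : 0 ≤ (4 : ℝ) ^ s * D ^ (-s) := by positivity
  rcases le_total A B with hAB | hAB
  · nlinarith [mul_le_mul_of_nonneg_left (key B hB (by linarith)) hA0, mul_nonneg hD0 hB0]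
  · nlinarith [mul_le_mul_of_nonneg_left (key A hA (by linarith)) hB0, mul_nonneg hD0 hA0]

/-- The convolution of two brackets of order `-m`, with `m > 2d`, is dominated by a bracket. -/
theorem integral_bracket_mul_bracket_le {m : ℝ} (hm : 2 * (d : ℝ) < m) (a w : P d) :
    Integrable (fun v : P d => (1 + ensq (v - a)) ^ (-(m / 2)) * (1 + ensq (w - v)) ^ (-(m / 2))) ∧
    ∫ v : P d, (1 + ensq (v - a)) ^ (-(m / 2)) * (1 + ensq (w - v)) ^ (-(m / 2)) ≤
      4 ^ (m / 2) * (2 * ∫ v : P d, (1 + ensq v) ^ (-(m / 2))) *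
        (1 + ensq (w - a)) ^ (-(m / 2)) := by
  have hm0 : 0 ≤ m / 2 := by
    have : (0 : ℝ) ≤ d := by positivity
    linarith
  have hsymm : ∀ v : P d, ensq (w - v) = ensq (v - w) := fun v => by
    simp only [ensq, Prod.fst_sub, Prod.snd_sub, norm_sub_rev]
  simp_rw [hsymm]
  have hpt : ∀ v : P d, (1 + ensq (v - a)) ^ (-(m / 2)) * (1 + ensq (v - w)) ^ (-(m / 2)) ≤
      4 ^ (m / 2) * (1 + ensq (a - w)) ^ (-(m / 2)) *
        ((1 + ensq (v - a)) ^ (-(m / 2)) + (1 + ensq (v - w)) ^ (-(m / 2))) := by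
    intro v
    refine rpow_neg_mul_rpow_neg_le hm0 ?_ ?_ ?_ ?_
    · linarith [ensq_nonneg (v - a)]
    · linarith [ensq_nonneg (v - w)]
    · linarith [ensq_nonneg (a - w)]
    · have h := ensq_add_le (a - v) (v - w)
      have h' : ensq (a - v) = ensq (v - a) := by
        simp only [ensq, Prod.fst_sub, Prod.snd_sub, norm_sub_rev]
      rw [sub_add_sub_cancel] at h
      linarith
  have hi : Integrable fun v : P d => 4 ^ (m / 2) * (1 + ensq (a - w)) ^ (-(m / 2)) *
        ((1 + ensq (v - a)) ^ (-(m / 2)) + (1 + ensq (v - w)) ^ (-(m / 2))) :=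
    ((integrable_bracket hm a).add (integrable_bracket hm w)).const_mul _
  have hi' : Integrable (fun v : P d =>
      (1 + ensq (v - a)) ^ (-(m / 2)) * (1 + ensq (v - w)) ^ (-(m / 2))) := by
    refine hi.mono' ((continuous_bracket _ a).mul (continuous_bracket _ w)).aestronglyMeasurable
      (.of_forall fun v => ?_)
    have h1 := ensq_nonneg (v - a)
    have h2 := ensq_nonneg (v - w)
    rw [Real.norm_of_nonneg (by positivity)]
    exact hpt v
  refine ⟨hi', (integral_mono hi' hi hpt).trans (le_of_eq ?_)⟩
  rw [integral_const_mul, integral_add (integrable_bracket hm a) (integrable_bracket hm w),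
    integral_sub_right_eq_self (fun v : P d => (1 + ensq v) ^ (-(m / 2))) a,
    integral_sub_right_eq_self (fun v : P d => (1 + ensq v) ^ (-(m / 2))) w]
  ring

/-- Transport of the bracket along a Lipschitz map. -/
theorem bracket_le_of_lipschitz {m L : ℝ} (hm : 0 ≤ m) {χ : P d → P d}
    (hχ : ∀ a b : P d, Real.sqrt (ensq (χ a - χ b)) ≤ L * Real.sqrt (ensq (a - b))) (a b : P d) :
    (1 + ensq (a - b)) ^ (-(m / 2)) ≤
      (1 + L ^ 2) ^ (m / 2) * (1 + ensq (χ a - χ b)) ^ (-(m / 2)) := by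
  have h0 := ensq_nonneg (a - b)
  have h1 := ensq_nonneg (χ a - χ b)
  have h2 : ensq (χ a - χ b) ≤ L ^ 2 * ensq (a - b) := by
    have := pow_le_pow_left₀ (Real.sqrt_nonneg _) (hχ a b) 2
    rwa [mul_pow, Real.sq_sqrt h0, Real.sq_sqrt h1] at this
  have h3 : ((1 + L ^ 2) * (1 + ensq (a - b))) ^ (-(m / 2)) ≤
      (1 + ensq (χ a - χ b)) ^ (-(m / 2)) :=
    Real.rpow_le_rpow_of_nonpos (by positivity) (by nlinarith [sq_nonneg L]) (by linarith)
  rwa [Real.mul_rpow (by positivity) (by positivity), Real.rpow_neg (by positivity),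
    inv_mul_le_iff₀ (by positivity)] at h3

/-- Composition estimate for two phase space kernels concentrated along the graphs of a Lipschitz
measure preserving map and of an arbitrary point. -/
theorem norm_integral_mul_le_bracket {m L : ℝ} (hm : 2 * (d : ℝ) < m) {χ : P d → P d}
    (hχ : ∀ a b : P d, Real.sqrt (ensq (χ a - χ b)) ≤ L * Real.sqrt (ensq (a - b)))
    (hmp : MeasurePreserving χ volume volume) {A₁ A₂ : ℝ} (hA₁ : 0 ≤ A₁) (hA₂ : 0 ≤ A₂)
    {k₁ k₂ : P d → ℂ} {p w : P d}
    (h₁ : ∀ v, ‖k₁ v‖ ≤ A₁ * (1 + ensq (w - χ v)) ^ (-(m / 2)))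
    (h₂ : ∀ v, ‖k₂ v‖ ≤ A₂ * (1 + ensq (v - p)) ^ (-(m / 2))) :
    ‖∫ v, k₂ v * k₁ v‖ ≤ A₁ * A₂ * (1 + L ^ 2) ^ (m / 2) *
      (4 ^ (m / 2) * (2 * ∫ v : P d, (1 + ensq v) ^ (-(m / 2))) *
        (1 + ensq (w - χ p)) ^ (-(m / 2))) := by
  have hm0 : 0 ≤ m := by
    have : (0 : ℝ) ≤ d := by positivity
    linarith
  obtain ⟨hi, hle⟩ := integral_bracket_mul_bracket_le hm (χ p) w
  set Ψ : P d → ℝ := fun v =>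
    (1 + ensq (v - χ p)) ^ (-(m / 2)) * (1 + ensq (w - v)) ^ (-(m / 2))
  have hcomp : Integrable (fun v => A₁ * A₂ * (1 + L ^ 2) ^ (m / 2) * Ψ (χ v)) :=
    (hmp.integrable_comp_of_integrable hi).const_mul _
  have hinteg : ∫ v, Ψ (χ v) = ∫ v, Ψ v := by
    have := integral_map (μ := volume) hmp.measurable.aemeasurable (f := Ψ)
      (by rw [hmp.map_eq]; exact hi.aestronglyMeasurable)
    rw [hmp.map_eq] at this
    exact this.symm
  refine (norm_integral_le_of_norm_le hcomp (.of_forall fun v => ?_)).trans ?_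
  · have e0 := ensq_nonneg (v - p)
    have e1 := ensq_nonneg (w - χ v)
    have e2 := ensq_nonneg (χ v - χ p)
    rw [norm_mul]
    calc ‖k₂ v‖ * ‖k₁ v‖ ≤ (A₂ * ((1 + L ^ 2) ^ (m / 2) * (1 + ensq (χ v - χ p)) ^ (-(m / 2)))) *
          (A₁ * (1 + ensq (w - χ v)) ^ (-(m / 2))) := by
            refine mul_le_mul ((h₂ v).trans ?_) (h₁ v) (norm_nonneg _) (by positivity)
            exact mul_le_mul_of_nonneg_left (bracket_le_of_lipschitz hm0 hχ v p) hA₂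
      _ = _ := by simp only [Ψ]; ring
  · rw [integral_const_mul, hinteg]
    exact mul_le_mul_of_nonneg_left hle (by positivity)

end JapaneseBracket

section WavePacket

variable {d : ℕ}

open scoped ContDiff FourierTransform

/-- The wave packet `π(w)g` at the point `y`. -/
def packet (w : P d) (y : E d) : ℂ :=
  Complex.exp (Complex.I * (⟪y, w.2⟫ : ℂ)) * Real.exp (-‖y - w.1‖ ^ 2 / 2)

/-- The complex conjugate of the wave packet `π(w)g` at the point `y`. -/
def packetBar (w : P d) (y : E d) : ℂ :=
  Complex.exp (-Complex.I * (⟪y, w.2⟫ : ℂ)) * Real.exp (-‖y - w.1‖ ^ 2 / 2)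

theorem contDiff_packet : ContDiff ℝ ∞ fun p : P d × E d => packet p.1 p.2 := by
  unfold packet
  have h1 : ContDiff ℝ ∞ fun p : P d × E d => ((⟪p.2, p.1.2⟫ : ℝ) : ℂ) :=
    Complex.ofRealCLM.contDiff.comp (contDiff_snd.inner ℝ (contDiff_snd.comp contDiff_fst))
  have h2 : ContDiff ℝ ∞ fun p : P d × E d => ((Real.exp (-‖p.2 - p.1.1‖ ^ 2 / 2) : ℝ) : ℂ) := by
    refine Complex.ofRealCLM.contDiff.comp (ContDiff.exp ?_)
    exact ((contDiff_snd.sub (contDiff_fst.comp contDiff_fst)).norm_sq ℝ).neg.div_const 2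
  exact (contDiff_const.mul h1).cexp.mul h2

theorem continuous_packetBar : Continuous fun p : P d × E d => packetBar p.1 p.2 := by
  unfold packetBar
  fun_prop

theorem norm_packetBar_le_one (w : P d) (y : E d) : ‖packetBar w y‖ ≤ 1 := by
  have h : -Complex.I * ((⟪y, w.2⟫ : ℝ) : ℂ) = ((-⟪y, w.2⟫ : ℝ) : ℂ) * Complex.I := by
    push_cast; ring
  rw [packetBar, norm_mul, h, Complex.norm_exp_ofReal_mul_I, one_mul, Complex.norm_real,
    Real.norm_of_nonneg (Real.exp_pos _).le, Real.exp_le_one_iff]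
  have := sq_nonneg ‖y - w.1‖
  linarith

/-- Partial derivatives of a jointly smooth function are jointly continuous. -/
theorem continuous_iteratedFDeriv_snd {W V : Type*} [NormedAddCommGroup W] [NormedSpace ℝ W]
    [NormedAddCommGroup V] [NormedSpace ℝ V] {Γ : W × V → ℂ} (hΓ : ContDiff ℝ ∞ Γ) (l : ℕ) :
    Continuous fun p : W × V => iteratedFDeriv ℝ l (fun y => Γ (p.1, y)) p.2 := by
  have h : ∀ p : W × V, iteratedFDeriv ℝ l (fun y => Γ (p.1, y)) p.2 =
      (iteratedFDeriv ℝ l Γ p).compContinuousLinearMap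
        fun _ => ContinuousLinearMap.inr ℝ W V := by
    intro p
    have e : (fun y => Γ (p.1, y)) =
        (fun q => Γ ((p.1, 0) + q)) ∘ ContinuousLinearMap.inr ℝ W V := by
      funext y
      simp
    have hs : ContDiff ℝ ∞ fun q => Γ ((p.1, 0) + q) := hΓ.comp (contDiff_const.add contDiff_id)
    rw [e, ContinuousLinearMap.iteratedFDeriv_comp_right _ hs _ (by exact_mod_cast le_top),
      iteratedFDeriv_comp_add_left]
    simp
  simp_rw [h]
  exact (ContinuousMultilinearMap.compContinuousLinearMapL
    (fun _ => ContinuousLinearMap.inr ℝ W V)).continuous.comp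
      (hΓ.continuous_iteratedFDeriv (by exact_mod_cast le_top))

theorem norm_iteratedFDeriv_char_le (ξ y : E d) (n : ℕ) :
    ‖iteratedFDeriv ℝ n (fun y : E d => Complex.exp (Complex.I * (⟪y, ξ⟫ : ℂ))) y‖ ≤
      n.factorial * (1 + ‖ξ‖) ^ n := by
  let g : ℝ → ℂ := fun t => Complex.exp (t * Complex.I)
  let f : E d →L[ℝ] ℝ := innerSL ℝ ξ
  have hgf : (fun y : E d => Complex.exp (Complex.I * (⟪y, ξ⟫ : ℂ))) = g ∘ f := by
    funext y
    simp only [g, f, Function.comp, innerSL_apply_apply, real_inner_comm, mul_comm]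
  have hg : ContDiff ℝ ∞ g :=
    (Complex.ofRealCLM.contDiff.mul contDiff_const).cexp
  have hgd : ∀ n : ℕ, iteratedDeriv n g = fun t => Complex.I ^ n * g t := by
    intro n
    induction n with
    | zero => simp
    | succ n ih =>
      rw [iteratedDeriv_succ, ih]
      funext t
      have : HasDerivAt g (Complex.I * g t) t := by
        have h := ((Complex.ofRealCLM.hasDerivAt (x := t)).mul_const Complex.I).cexp
        simpa [g, mul_comm] using h
      rw [(this.const_mul (Complex.I ^ n)).deriv]
      ring
  rw [hgf]
  have := norm_iteratedFDeriv_comp_le (N := ∞) hg f.contDiff (n := n)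
    (by exact_mod_cast le_top) y
    (C := 1) (D := 1 + ‖ξ‖) (fun i _ => ?_) (fun i hi _ => ?_)
  · simpa using this
  · rw [norm_iteratedFDeriv_eq_norm_iteratedDeriv, hgd]
    simp [g, Complex.norm_exp_ofReal_mul_I]
  · obtain rfl | h2 := hi.eq_or_lt
    · rw [pow_one, norm_iteratedFDeriv_one, f.fderiv, innerSL_apply_norm]
      linarith
    · obtain ⟨j, rfl⟩ := Nat.exists_eq_add_of_le' h2
      have : iteratedFDeriv ℝ (j + 1 + 1) f y = 0 := by
        rw [iteratedFDeriv_succ_eq_comp_right, funext fun x => f.fderiv (x := x),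
          iteratedFDeriv_succ_const]
        exact map_zero (continuousMultilinearCurryRightEquiv' ℝ (j + 1) (E d) ℝ).symm
      rw [this]
      rw [norm_zero]
      positivity

theorem one_add_norm_pow_le (x y : E d) (k : ℕ) :
    (1 + ‖y‖) ^ k ≤ (1 + ‖x‖) ^ k * (1 + ‖y - x‖) ^ k := by
  rw [← mul_pow]
  refine pow_le_pow_left₀ (by positivity) ?_ k
  have := norm_le_norm_add_norm_sub' y x
  nlinarith [norm_nonneg x, norm_nonneg (y - x), mul_nonneg (norm_nonneg x) (norm_nonneg (y - x))]

theorem SchwartzMap.exists_one_add_pow_mul_le (f : SCH d) (k l : ℕ) :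
    ∃ C : ℝ, 0 ≤ C ∧ ∀ n ≤ l, ∀ y, (1 + ‖y‖) ^ k * ‖iteratedFDeriv ℝ n f y‖ ≤ C :=
  ⟨_, by positivity, fun n hn y => SchwartzMap.one_add_le_sup_seminorm_apply (𝕜 := ℂ)
    (m := (k, l)) le_rfl hn f y⟩

theorem packet_eq_mul {g : SCH d} (hg : ∀ y, g y = packet 0 y) (w : P d) :
    packet w = fun y =>
      Complex.exp (Complex.I * (⟪y, w.2⟫ : ℂ)) * g (y - w.1) := by
  funext y
  rw [hg]
  simp [packet]

theorem norm_iteratedFDeriv_packet_le {g : SCH d} (hg : ∀ y, g y = packet 0 y) (k l : ℕ) :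
    ∃ C : ℝ, 0 ≤ C ∧ ∀ (w : P d) (y : E d), ‖y‖ ^ k * ‖iteratedFDeriv ℝ l (packet w) y‖ ≤
      C * ((1 + ‖w.1‖) ^ k * (1 + ‖w.2‖) ^ l) := by
  obtain ⟨S, hS0, hS⟩ := SchwartzMap.exists_one_add_pow_mul_le g k l
  refine ⟨∑ i ∈ Finset.range (l + 1), (l.choose i : ℝ) * i.factorial * S, by positivity,
    fun w y => ?_⟩
  have h1 : ContDiff ℝ ∞ fun y : E d => Complex.exp (Complex.I * (⟪y, w.2⟫ : ℂ)) := by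
    have h1 : ContDiff ℝ ∞ fun p : E d => ((⟪p, w.2⟫ : ℝ) : ℂ) :=
      Complex.ofRealCLM.contDiff.comp (contDiff_id.inner ℝ contDiff_const)
    exact (contDiff_const.mul h1).cexp
  have h2 : ContDiff ℝ ∞ fun y : E d => g (y - w.1) :=
    (g.smooth ⊤).comp (contDiff_id.sub contDiff_const)
  rw [packet_eq_mul hg]
  calc ‖y‖ ^ k * ‖iteratedFDeriv ℝ l (fun y =>
          Complex.exp (Complex.I * (⟪y, w.2⟫ : ℂ)) * g (y - w.1)) y‖
      ≤ ((1 + ‖w.1‖) ^ k * (1 + ‖y - w.1‖) ^ k) *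
        ∑ i ∈ Finset.range (l + 1), (l.choose i : ℝ) *
          ‖iteratedFDeriv ℝ i (fun y : E d => Complex.exp (Complex.I * (⟪y, w.2⟫ : ℂ))) y‖ *
          ‖iteratedFDeriv ℝ (l - i) (fun y : E d => g (y - w.1)) y‖ := by
        gcongr
        · exact (pow_le_pow_left₀ (norm_nonneg y) (by linarith) k).trans
            (one_add_norm_pow_le w.1 y k)
        · exact norm_iteratedFDeriv_mul_le h1 h2 y (by exact_mod_cast le_top)
    _ = ∑ i ∈ Finset.range (l + 1), (1 + ‖w.1‖) ^ k * ((l.choose i : ℝ) *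
          ‖iteratedFDeriv ℝ i (fun y : E d => Complex.exp (Complex.I * (⟪y, w.2⟫ : ℂ))) y‖ *
          ((1 + ‖y - w.1‖) ^ k * ‖iteratedFDeriv ℝ (l - i) g (y - w.1)‖)) := by
        rw [Finset.mul_sum]
        refine Finset.sum_congr rfl fun i _ => ?_
        rw [iteratedFDeriv_comp_sub (f := g)]
        ring
    _ ≤ ∑ i ∈ Finset.range (l + 1), (1 + ‖w.1‖) ^ k * ((l.choose i : ℝ) *
          (i.factorial * (1 + ‖w.2‖) ^ l) * S) := by
        gcongr with i hi
        · refine (norm_iteratedFDeriv_char_le w.2 y i).trans ?_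
          have : i ≤ l := Nat.lt_succ_iff.1 (Finset.mem_range.1 hi)
          gcongr
          linarith [norm_nonneg w.2]
        · exact hS _ (Nat.sub_le _ _) _
    _ = _ := by
        rw [Finset.sum_mul]
        exact Finset.sum_congr rfl fun i _ => by ring

/-- The product of a Schwartz function with a translate of another one, with all its seminorms
rapidly decreasing in the translation parameter. -/
theorem exists_mul_translate (f g : SCH d) :
    ∃ h : E d → SCH d, (∀ x y, h x y = f y * g (y - x)) ∧
      ∀ N k l : ℕ, ∃ C : ℝ, 0 ≤ C ∧ ∀ x,
        (1 + ‖x‖) ^ N * SchwartzMap.seminorm ℂ k l (h x) ≤ C := by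
  have htg : ∀ x : E d, (fun y : E d => g (y - x)).HasTemperateGrowth := fun x =>
    (SchwartzMap.compSubConstCLM ℂ x g).hasTemperateGrowth
  refine ⟨fun x => SchwartzMap.smulLeftCLM ℂ (fun y : E d => g (y - x)) f, fun x y => ?_, ?_⟩
  · rw [SchwartzMap.smulLeftCLM_apply_apply (htg x), smul_eq_mul, mul_comm]
  intro N k l
  obtain ⟨S, hS0, hS⟩ := SchwartzMap.exists_one_add_pow_mul_le f (k + N) l
  obtain ⟨S', hS0', hS'⟩ := SchwartzMap.exists_one_add_pow_mul_le g N l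
  refine ⟨∑ i ∈ Finset.range (l + 1), (l.choose i : ℝ) * S * S', by positivity, fun x => ?_⟩
  rw [← le_div_iff₀' (by positivity)]
  refine SchwartzMap.seminorm_le_bound ℂ k l _ (by positivity) fun y => ?_
  rw [le_div_iff₀' (by positivity)]
  have e : ⇑(SchwartzMap.smulLeftCLM ℂ (fun y : E d => g (y - x)) f) =
      fun y => f y * g (y - x) := by
    funext y
    rw [SchwartzMap.smulLeftCLM_apply_apply (htg x), smul_eq_mul, mul_comm]
  have h2 : ContDiff ℝ ∞ fun y : E d => g (y - x) :=
    (g.smooth ⊤).comp (contDiff_id.sub contDiff_const)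
  rw [e]
  have hx : (1 + ‖x‖) ^ N ≤ (1 + ‖y‖) ^ N * (1 + ‖y - x‖) ^ N := by
    rw [norm_sub_rev]
    exact one_add_norm_pow_le y x N
  calc (1 + ‖x‖) ^ N * (‖y‖ ^ k * ‖iteratedFDeriv ℝ l (fun y => f y * g (y - x)) y‖)
      ≤ ((1 + ‖y‖) ^ N * (1 + ‖y - x‖) ^ N) * ((1 + ‖y‖) ^ k *
        ∑ i ∈ Finset.range (l + 1), (l.choose i : ℝ) * ‖iteratedFDeriv ℝ i f y‖ *
          ‖iteratedFDeriv ℝ (l - i) (fun y : E d => g (y - x)) y‖) := by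
        gcongr
        · linarith
        · exact norm_iteratedFDeriv_mul_le (f.smooth ⊤) h2 y (by exact_mod_cast le_top)
    _ = ∑ i ∈ Finset.range (l + 1), (l.choose i : ℝ) *
          ((1 + ‖y‖) ^ (k + N) * ‖iteratedFDeriv ℝ i f y‖) *
          ((1 + ‖y - x‖) ^ N * ‖iteratedFDeriv ℝ (l - i) g (y - x)‖) := by
        rw [← mul_assoc, Finset.mul_sum]
        refine Finset.sum_congr rfl fun i _ => ?_
        rw [iteratedFDeriv_comp_sub (f := g)]
        ring
    _ ≤ ∑ i ∈ Finset.range (l + 1), (l.choose i : ℝ) * S * S' := by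
        gcongr with i hi
        · exact hS _ (Nat.lt_succ_iff.1 (Finset.mem_range.1 hi)) _
        · exact hS' _ (Nat.sub_le _ _) _

/-- The short-time Fourier transform with Gaussian window. -/
def stft (f : SCH d) (w : P d) : ℂ := ∫ y, f y * packetBar w y

theorem continuous_stft (f : SCH d) : Continuous (stft f) := by
  refine continuous_of_dominated (bound := fun y => ‖f y‖) (fun w => ?_) (fun w => ?_)
    f.integrable.norm ?_
  · exact (f.continuous.mul (continuous_packetBar.comp
      (continuous_const.prodMk continuous_id))).aestronglyMeasurable
  · refine .of_forall fun y => ?_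
    rw [norm_mul]
    exact mul_le_of_le_one_right (norm_nonneg _) (norm_packetBar_le_one w y)
  · refine .of_forall fun y => ?_
    have h : Continuous fun w : P d => packetBar w y := by
      unfold packetBar
      fun_prop
    exact continuous_const.mul h

theorem stft_eq_fourier {f g : SCH d} (hg : ∀ y, g y = packet 0 y) {h : E d → SCH d}
    (hh : ∀ x y, h x y = f y * g (y - x)) (w : P d) :
    stft f w = 𝓕 (h w.1) ((2 * π)⁻¹ • w.2) := by
  rw [SchwartzMap.fourier_coe, Real.fourier_eq']
  refine integral_congr_ae (.of_forall fun y => ?_)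
  have h1 : ((-2 * π * ⟪y, (2 * π)⁻¹ • w.2⟫ : ℝ) : ℂ) * Complex.I =
      -Complex.I * (⟪y, w.2⟫ : ℂ) := by
    rw [inner_smul_right]
    have : (-2 * π * ((2 * π)⁻¹ * ⟪y, w.2⟫) : ℝ) = -⟪y, w.2⟫ := by
      field_simp
    rw [this]
    push_cast; ring
  simp only [smul_eq_mul]
  rw [h1, hh, hg]
  simp only [packetBar, packet]
  simp
  ring

theorem stft_decay {g : SCH d} (hg : ∀ y, g y = packet 0 y) (f : SCH d) (M N : ℕ) :
    ∃ C : ℝ, 0 ≤ C ∧ ∀ w : P d, (1 + ‖w.1‖) ^ M * (1 + ‖w.2‖) ^ N * ‖stft f w‖ ≤ C := by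
  obtain ⟨h, hh, hdec⟩ := exists_mul_translate f g
  let q : Seminorm ℂ (SCH d) :=
    ((Finset.Iic (N, 0)).sup (schwartzSeminormFamily ℂ (E d) ℂ)).comp
      (SchwartzMap.fourierTransformCLM ℂ : SCH d →L[ℂ] SCH d).toLinearMap
  obtain ⟨s, D, -, hD⟩ := Seminorm.bound_of_continuous (schwartz_withSeminorms ℂ (E d) ℂ) q (by
    have hq : Continuous ((Finset.Iic (N, 0)).sup (schwartzSeminormFamily ℂ (E d) ℂ) :
        Seminorm ℂ (SCH d)) :=
      Seminorm.continuous_finsetSup fun i _ =>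
        (schwartz_withSeminorms ℂ (E d) ℂ).continuous_seminorm i
    exact hq.comp (SchwartzMap.fourierTransformCLM ℂ : SCH d →L[ℂ] SCH d).continuous)
  choose C hC0 hC using fun i : ℕ × ℕ => hdec M i.1 i.2
  refine ⟨(2 * π + 1) ^ N * (2 ^ N * (D * ∑ i ∈ s, C i)), ?_, fun w => ?_⟩
  · have := Finset.sum_nonneg fun i (_ : i ∈ s) => hC0 i
    positivity
  have hsup : (1 + ‖w.1‖) ^ M * s.sup (schwartzSeminormFamily ℂ (E d) ℂ) (h w.1) ≤
      ∑ i ∈ s, C i := by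
    rw [← le_div_iff₀' (by positivity)]
    have hsum := Finset.sum_nonneg fun i (_ : i ∈ s) => hC0 i
    refine Seminorm.finset_sup_apply_le (by positivity) fun i hi => ?_
    rw [le_div_iff₀' (by positivity)]
    exact (hC i w.1).trans (Finset.single_le_sum (fun j _ => hC0 j) hi)
  set η : E d := (2 * π)⁻¹ • w.2
  have hη : 1 + ‖w.2‖ ≤ (2 * π + 1) * (1 + ‖η‖) := by
    have : ‖w.2‖ = 2 * π * ‖η‖ := by
      rw [norm_smul, Real.norm_of_nonneg (by positivity)]
      field_simp
    rw [this]
    nlinarith [norm_nonneg η, Real.pi_pos]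
  have hF : (1 + ‖η‖) ^ N * ‖stft f w‖ ≤ 2 ^ N * q (h w.1) := by
    have := SchwartzMap.one_add_le_sup_seminorm_apply (𝕜 := ℂ) (m := (N, 0)) le_rfl le_rfl
      (𝓕 (h w.1)) η
    rw [norm_iteratedFDeriv_zero] at this
    rw [stft_eq_fourier hg hh]
    exact this
  calc (1 + ‖w.1‖) ^ M * (1 + ‖w.2‖) ^ N * ‖stft f w‖
      ≤ (1 + ‖w.1‖) ^ M * ((2 * π + 1) * (1 + ‖η‖)) ^ N * ‖stft f w‖ := by gcongr
    _ = (1 + ‖w.1‖) ^ M * (2 * π + 1) ^ N * ((1 + ‖η‖) ^ N * ‖stft f w‖) := by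
        rw [mul_pow]; ring
    _ ≤ (1 + ‖w.1‖) ^ M * (2 * π + 1) ^ N *
          (2 ^ N * (D * s.sup (schwartzSeminormFamily ℂ (E d) ℂ) (h w.1))) := by
        refine mul_le_mul_of_nonneg_left (hF.trans ?_) (by positivity)
        exact mul_le_mul_of_nonneg_left (hD (h w.1)) (by positivity)
    _ = (2 * π + 1) ^ N * (2 ^ N * (D *
          ((1 + ‖w.1‖) ^ M * s.sup (schwartzSeminormFamily ℂ (E d) ℂ) (h w.1)))) := by ring
    _ ≤ _ := by gcongr

theorem norm_packet_le_one (w : P d) (y : E d) : ‖packet w y‖ ≤ 1 := by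
  rw [packet, norm_mul, mul_comm Complex.I, Complex.norm_exp_ofReal_mul_I, one_mul,
    Complex.norm_real, Real.norm_of_nonneg (Real.exp_pos _).le, Real.exp_le_one_iff]
  have := sq_nonneg ‖y - w.1‖
  linarith

theorem integrable_one_add_norm_phaseSpace :
    Integrable fun w : P d => ((1 + ‖w‖) ^ (2 * d + 1))⁻¹ := by
  have h := integrable_one_add_norm (E := P d) (μ := volume) (r := (2 * d + 1 : ℕ)) (by
    rw [Module.finrank_prod, finrank_euclideanSpace_fin]
    push_cast
    linarith)
  refine h.congr (.of_forall fun w => ?_)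
  simp only
  rw [Real.rpow_neg (by positivity), Real.rpow_natCast]

theorem one_add_norm_le_mul (w : P d) : 1 + ‖w‖ ≤ (1 + ‖w.1‖) * (1 + ‖w.2‖) := by
  have h1 := norm_nonneg w.1
  have h2 := norm_nonneg w.2
  have : ‖w‖ ≤ ‖w.1‖ + ‖w.2‖ := by
    rw [Prod.norm_def]
    exact max_le (by linarith) (by linarith)
  nlinarith [mul_nonneg h1 h2]

/-- The short-time Fourier transform of a Schwartz function, multiplied by polynomial weights,
is dominated by an integrable function. -/
theorem exists_stft_le {g : SCH d} (hg : ∀ y, g y = packet 0 y) (f : SCH d) (k l : ℕ) :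
    ∃ C : ℝ, 0 ≤ C ∧ ∀ w : P d, (1 + ‖w.1‖) ^ k * (1 + ‖w.2‖) ^ l * ‖stft f w‖ ≤
      C * ((1 + ‖w‖) ^ (2 * d + 1))⁻¹ := by
  obtain ⟨C, hC0, hC⟩ := stft_decay hg f (k + (2 * d + 1)) (l + (2 * d + 1))
  refine ⟨C, hC0, fun w => ?_⟩
  rw [← div_eq_mul_inv, le_div_iff₀ (by positivity)]
  calc (1 + ‖w.1‖) ^ k * (1 + ‖w.2‖) ^ l * ‖stft f w‖ * (1 + ‖w‖) ^ (2 * d + 1)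
      ≤ (1 + ‖w.1‖) ^ k * (1 + ‖w.2‖) ^ l * ‖stft f w‖ *
        ((1 + ‖w.1‖) * (1 + ‖w.2‖)) ^ (2 * d + 1) := by
        gcongr
        exact one_add_norm_le_mul w
    _ = (1 + ‖w.1‖) ^ (k + (2 * d + 1)) * (1 + ‖w.2‖) ^ (l + (2 * d + 1)) * ‖stft f w‖ := by
        rw [mul_pow, pow_add, pow_add]; ring
    _ ≤ C := hC w

theorem integrable_stft_mul_packet {g : SCH d} (hg : ∀ y, g y = packet 0 y) (f : SCH d)
    (y : E d) : Integrable fun w : P d => stft f w * packet w y := by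
  obtain ⟨C, -, hC⟩ := exists_stft_le hg f 0 0
  refine (integrable_one_add_norm_phaseSpace.const_mul C).mono' ?_ (.of_forall fun w => ?_)
  · exact ((continuous_stft f).mul (contDiff_packet.continuous.comp
      (continuous_id.prodMk continuous_const))).aestronglyMeasurable
  · rw [norm_mul]
    refine (mul_le_of_le_one_right (norm_nonneg _) (norm_packet_le_one w y)).trans ?_
    simpa using hC w

/-- The normalisation constant in the inversion formula for the short-time Fourier transform. -/
def stftConst (d : ℕ) : ℝ := (2 * π) ^ d * ∫ x : E d, Real.exp (-‖x‖ ^ 2)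

theorem stftConst_pos (d : ℕ) : 0 < stftConst d := by
  have h := GaussianFourier.integral_rexp_neg_mul_sq_norm (V := E d) (b := 1) one_pos
  simp only [neg_mul, one_mul] at h
  rw [stftConst, h]
  positivity

theorem integral_stft_mul_packet_snd {g : SCH d} (hg : ∀ y, g y = packet 0 y) (f : SCH d)
    (x y : E d) : ∫ ξ : E d, stft f (x, ξ) * packet (x, ξ) y =
      ((2 * π) ^ d : ℝ) * Real.exp (-‖y - x‖ ^ 2) * f y := by
  obtain ⟨h, hh, -⟩ := exists_mul_translate f g
  have hgr : g (y - x) = Real.exp (-‖y - x‖ ^ 2 / 2) := by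
    rw [hg, packet]; simp
  let Φ : E d → ℂ := fun η => Complex.exp ((2 * π * ⟪η, y⟫ : ℝ) * Complex.I) • 𝓕 (h x) η
  have hΦ : ∫ η, Φ η = h x y := by
    rw [← Real.fourierInv_eq', ← SchwartzMap.fourierInv_coe, FourierTransform.fourierInv_fourier_eq]
  have hξ : ∀ ξ : E d, stft f (x, ξ) * packet (x, ξ) y = Φ ((2 * π)⁻¹ • ξ) * g (y - x) := by
    intro ξ
    have : 2 * π * ⟪(2 * π)⁻¹ • ξ, y⟫ = ⟪y, ξ⟫ := by
      rw [real_inner_smul_left, real_inner_comm]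
      field_simp
    simp only [Φ]
    rw [stft_eq_fourier hg hh, packet_eq_mul hg, this, smul_eq_mul]
    ring_nf
  simp_rw [hξ]
  rw [integral_mul_const, Measure.integral_comp_inv_smul_of_nonneg volume Φ (by positivity), hΦ,
    hh, hgr, finrank_euclideanSpace_fin, Complex.real_smul]
  have : (Real.exp (-‖y - x‖ ^ 2) : ℂ) =
      Real.exp (-‖y - x‖ ^ 2 / 2) * Real.exp (-‖y - x‖ ^ 2 / 2) := by
    rw [← Complex.ofReal_mul, ← Real.exp_add]
    ring_nf
  rw [this]
  ring

/-- Inversion formula for the short-time Fourier transform. -/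
theorem integral_stft_mul_packet {g : SCH d} (hg : ∀ y, g y = packet 0 y) (f : SCH d)
    (y : E d) : ∫ w : P d, stft f w * packet w y = stftConst d * f y := by
  have hinteg := integrable_stft_mul_packet hg f y
  rw [Measure.volume_eq_prod] at hinteg ⊢
  rw [integral_prod _ hinteg]
  simp_rw [integral_stft_mul_packet_snd hg]
  rw [integral_mul_const, integral_const_mul, integral_complex_ofReal,
    integral_sub_left_eq_self (fun x : E d => Real.exp (-‖x‖ ^ 2)) volume y, stftConst]
  push_cast
  rfl

/-- A continuous functional applied to the wave packet decomposition of a Schwartz function. -/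
theorem functional_eq_integral_stft {G : P d → SCH d} (hG : ∀ w y, G w y = packet w y)
    (f : SCH d) (lam : SCH d →L[ℂ] ℂ) :
    (stftConst d : ℂ) * lam f = ∫ w : P d, stft f w * lam (G w) := by
  have hg : ∀ y, G 0 y = packet 0 y := hG 0
  have hGp : ∀ w, ⇑(G w) = packet w := fun w => funext (hG w)
  have hD : ∀ (l : ℕ) (w : P d) (y : E d), iterD l (stft f w • G w) y =
      stft f w • iterD l (packet w) y := by
    intro l w y
    unfold iterD
    rw [← hGp]
    exact iteratedFDeriv_const_smul_apply ((G w).smooth _).contDiffAt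
  have key := schwartz_functional_integral (μ := (volume : Measure (P d)))
    (K := fun w => stft f w • G w)
    (F := (stftConst d : ℂ) • f) (b := fun w => ((1 + ‖w‖) ^ (2 * d + 1))⁻¹)
    (fun y => ?_) (fun l => ?_) integrable_one_add_norm_phaseSpace (fun w => ?_)
    (fun k l => ?_) lam
  · simpa only [map_smul, smul_eq_mul] using key
  · simp only [_root_.smul_apply, smul_eq_mul, hG]
    exact (integral_stft_mul_packet hg f y).symm
  · simp_rw [hD]
    exact ((continuous_stft f).comp continuous_fst).smul
      (continuous_iteratedFDeriv_snd contDiff_packet l)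
  · exact inv_le_one_of_one_le₀ (one_le_pow₀ (by linarith [norm_nonneg w]))
  · obtain ⟨C₁, hC₁0, hC₁⟩ := norm_iteratedFDeriv_packet_le hg k l
    obtain ⟨C₂, hC₂0, hC₂⟩ := exists_stft_le hg f k l
    refine ⟨C₁ * C₂, by positivity, fun w y => ?_⟩
    rw [hD, norm_smul, norm_iterD]
    calc ‖y‖ ^ k * (‖stft f w‖ * ‖iteratedFDeriv ℝ l (packet w) y‖)
        = ‖y‖ ^ k * ‖iteratedFDeriv ℝ l (packet w) y‖ * ‖stft f w‖ := by ring
      _ ≤ C₁ * ((1 + ‖w.1‖) ^ k * (1 + ‖w.2‖) ^ l) * ‖stft f w‖ := by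
          exact mul_le_mul_of_nonneg_right (hC₁ w y) (norm_nonneg _)
      _ = C₁ * ((1 + ‖w.1‖) ^ k * (1 + ‖w.2‖) ^ l * ‖stft f w‖) := by ring
      _ ≤ C₁ * (C₂ * ((1 + ‖w‖) ^ (2 * d + 1))⁻¹) := by
          exact mul_le_mul_of_nonneg_left (hC₂ w) hC₁0
      _ = _ := by ring

end WavePacket

/-- composition theorem for the classes `FIO(χ)`.  `T₂ : 𝒮 → 𝒮` and
`T₁ : 𝒮 → 𝒮'` are continuous linear maps whose Gaussian wave-packet matrices are
dominated by `A₂·⟨w - χ₂ z⟩^{-m}` and `A₁·⟨w - χ₁ z⟩^{-m}` respectively, with `m > 2d`,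
`χ₁` a Lipschitz (constant `L`) measure preserving bijection of `ℝ^{2d}` and `χ₂` any
map.  Then the wave-packet matrix of `T₁ T₂` is dominated by `C·A₁·A₂·⟨w - χ₁(χ₂ z)⟩^{-m}`
with `C = C(m,d,L)`.  Here `G z = π(z)g`, `Gbar z = conj (π(z)g)` (Gaussian window),
`⟨T₁ u, π(w)g⟩ = T₁ u (Gbar w)`, and for the Schwartz function `T₂ u` the pairing is
`∫ (T₂ u)(y)·(Gbar w)(y) dy`. -/
theorem stmt4 (d : ℕ) (hd : 1 ≤ d) (m : ℝ) (hm : 2 * (d : ℝ) < m) (L : ℝ) (hL : 0 < L) :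
    ∃ C > (0 : ℝ), ∀ (G Gbar : P d → SCH d),
      (∀ (z : P d) (y : E d), G z y =
        Complex.exp (Complex.I * (⟪y, z.2⟫ : ℂ)) * Real.exp (-‖y - z.1‖ ^ 2 / 2)) →
      (∀ (z : P d) (y : E d), Gbar z y =
        Complex.exp (-Complex.I * (⟪y, z.2⟫ : ℂ)) * Real.exp (-‖y - z.1‖ ^ 2 / 2)) →
      ∀ (χ₁ : P d → P d), Function.Bijective χ₁ →
        (∀ a b : P d, Real.sqrt (ensq (χ₁ a - χ₁ b)) ≤ L * Real.sqrt (ensq (a - b))) →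
        MeasurePreserving χ₁ volume volume →
      ∀ (χ₂ : P d → P d),
      ∀ (T₁ : SCH d →L[ℂ] (SCH d →L[ℂ] ℂ)) (T₂ : SCH d →L[ℂ] SCH d) (A₁ A₂ : ℝ),
        0 ≤ A₁ → 0 ≤ A₂ →
      (∀ z w : P d, ‖T₁ (G z) (Gbar w)‖ ≤ A₁ * (1 + ensq (w - χ₁ z)) ^ (-(m / 2))) →
      (∀ z w : P d, ‖∫ y, T₂ (G z) y * Gbar w y‖ ≤
          A₂ * (1 + ensq (w - χ₂ z)) ^ (-(m / 2))) →
      ∀ z w : P d, ‖T₁ (T₂ (G z)) (Gbar w)‖ ≤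
          C * A₁ * A₂ * (1 + ensq (w - χ₁ (χ₂ z))) ^ (-(m / 2)) := by
  set I : ℝ := ∫ v : P d, (1 + ensq v) ^ (-(m / 2))
  have hI : 0 ≤ I := integral_nonneg fun v =>
    Real.rpow_nonneg (by linarith [ensq_nonneg v]) _
  set D : ℝ := (1 + L ^ 2) ^ (m / 2) * (4 ^ (m / 2) * (2 * I))
  have hD : 0 ≤ D := by positivity
  have hκ := stftConst_pos d
  refine ⟨(stftConst d)⁻¹ * (D + 1), by positivity, ?_⟩
  intro G Gbar hG hGbar χ₁ _ hχ₁ hmp χ₂ T₁ T₂ A₁ A₂ hA₁ hA₂ h₁ h₂ z w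
  let lam : SCH d →L[ℂ] ℂ :=
    { toFun := fun u => T₁ u (Gbar w)
      map_add' := fun u v => by rw [map_add, _root_.add_apply]
      map_smul' := fun c u => by rw [map_smul, _root_.smul_apply, RingHom.id_apply]
      cont := (continuous_eval_const (Gbar w)).comp T₁.continuous }
  have hrep : (stftConst d : ℂ) * T₁ (T₂ (G z)) (Gbar w) =
      ∫ v : P d, stft (T₂ (G z)) v * T₁ (G v) (Gbar w) :=
    functional_eq_integral_stft hG (T₂ (G z)) lam
  have hst : ∀ v, stft (T₂ (G z)) v = ∫ y, T₂ (G z) y * Gbar v y := fun v =>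
    integral_congr_ae (.of_forall fun y => congrArg _ (hGbar v y).symm)
  have hb := norm_integral_mul_le_bracket hm hχ₁ hmp hA₁ hA₂
    (k₁ := fun v => T₁ (G v) (Gbar w)) (k₂ := stft (T₂ (G z))) (p := χ₂ z) (w := w)
    (fun v => h₁ v w) (fun v => by rw [hst]; exact h₂ z v)
  rw [← hrep, norm_mul, Complex.norm_real, Real.norm_of_nonneg hκ.le, ← le_div_iff₀' hκ] at hb
  refine hb.trans ?_
  have hB : 0 ≤ (1 + ensq (w - χ₁ (χ₂ z))) ^ (-(m / 2)) :=
    Real.rpow_nonneg (by linarith [ensq_nonneg (w - χ₁ (χ₂ z))]) _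
  rw [div_eq_inv_mul]
  calc (stftConst d)⁻¹ * (A₁ * A₂ * (1 + L ^ 2) ^ (m / 2) *
        (4 ^ (m / 2) * (2 * I) * (1 + ensq (w - χ₁ (χ₂ z))) ^ (-(m / 2))))
      = (stftConst d)⁻¹ * D * A₁ * A₂ * (1 + ensq (w - χ₁ (χ₂ z))) ^ (-(m / 2)) := by ring
    _ ≤ (stftConst d)⁻¹ * (D + 1) * A₁ * A₂ * (1 + ensq (w - χ₁ (χ₂ z))) ^ (-(m / 2)) := by
        gcongr
        linarith
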